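/- Suppose the unit vectors u_1,…,u_m and positive weights c_1,…,c_m satisfy John's conditions. Let 1 ≤ k ≤ n, let (v_j)_{j=1}^n be an orthonormal basis of ℝ^n, let α_1,…,α_k be positive reals, let y ∈ ℝ^n, and assume that for every i: ⟨u_i, y⟩ + (Σ_{j=1}^k α_j² ⟨u_i, v_j⟩²)^{1/2} ≤ 1. Then Σ_{j=1}^k α_j² ≤ n + ‖y‖². -/

import Mathlib

/-!
Squaring the hypothesis gives `∑ j, α j² ⟪u i, v j⟫² ≤ (1 - ⟪u i, y⟫)²` for each `i`. Average this
over `i` with the weights `c i`. The decomposition of the identity gives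
`∑ i, c i ⟪u i, x⟫² = ‖x‖²` (`john_sum_sq`), so the left side becomes `∑ j, α j²`. On the right the
constant term contributes `∑ i, c i = n` (`john_sum_weights`, the trace of the decomposition), the
linear term vanishes because `∑ i, c i • u i = 0`, and the quadratic term is `‖y‖²`.
-/

open Finset RealInnerProductSpace

lemma john_sum_sq {n m : ℕ} (u : Fin m → EuclideanSpace ℝ (Fin n)) (c : Fin m → ℝ)
    (hb : ∀ x : EuclideanSpace ℝ (Fin n), ∑ i, (c i * ⟪u i, x⟫) • u i = x)
    (x : EuclideanSpace ℝ (Fin n)) : ∑ i, c i * ⟪u i, x⟫ ^ 2 = ‖x‖ ^ 2 := by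
  have h : ⟪∑ i, (c i * ⟪u i, x⟫) • u i, x⟫ = ⟪x, x⟫ := by rw [hb x]
  rw [sum_inner, real_inner_self_eq_norm_sq] at h
  rw [← h]
  refine Finset.sum_congr rfl fun i _ => ?_
  rw [real_inner_smul_left]
  ring

/-- Taking the trace of `∑ i, c i • u i ⊗ u i = 1`: the weights sum to the dimension. -/
lemma john_sum_weights {n m : ℕ} (u : Fin m → EuclideanSpace ℝ (Fin n)) (c : Fin m → ℝ)
    (hu : ∀ i, ‖u i‖ = 1)
    (hb : ∀ x : EuclideanSpace ℝ (Fin n), ∑ i, (c i * ⟪u i, x⟫) • u i = x) :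
    ∑ i, c i = n := by
  let e := EuclideanSpace.basisFun (Fin n) ℝ
  calc ∑ i, c i = ∑ i, ∑ j, c i * ⟪u i, e j⟫ ^ 2 := by
        refine Finset.sum_congr rfl fun i _ => ?_
        rw [← Finset.mul_sum, e.sum_sq_inner_left, hu i]
        ring
    _ = ∑ j, ‖e j‖ ^ 2 := by
        rw [Finset.sum_comm]
        exact Finset.sum_congr rfl fun j _ => john_sum_sq u c hb (e j)
    _ = n := by simp

/-- Inequality (11) of Proposition 4: under John's conditions, if
`⟪u i, y⟫ + √(∑ j, α j² ⟪u i, v j⟫²) ≤ 1` for every `i`, then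
`∑ j, α j² ≤ n + ‖y‖²`. -/
theorem stmt_13 {n m k : ℕ} (hn : 1 ≤ n) (hm : 1 ≤ m) (hk1 : 1 ≤ k) (hkn : k ≤ n)
    (u : Fin m → EuclideanSpace ℝ (Fin n)) (c : Fin m → ℝ)
    (hu : ∀ i, ‖u i‖ = 1) (hc : ∀ i, 0 < c i)
    (ha : ∑ i, c i • u i = 0)
    (hb : ∀ x : EuclideanSpace ℝ (Fin n), ∑ i, (c i * ⟪u i, x⟫) • u i = x)
    (y : EuclideanSpace ℝ (Fin n))
    (v : OrthonormalBasis (Fin n) ℝ (EuclideanSpace ℝ (Fin n)))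
    (α : Fin k → ℝ) (hα : ∀ j, 0 < α j)
    (htouch : ∀ i, ⟪u i, y⟫ +
      Real.sqrt (∑ j : Fin k, (α j) ^ 2 * ⟪u i, v (Fin.castLE hkn j)⟫ ^ 2) ≤ 1) :
    ∑ j, (α j) ^ 2 ≤ n + ‖y‖ ^ 2 := by
  have hsq : ∀ i, ∑ j : Fin k, (α j) ^ 2 * ⟪u i, v (Fin.castLE hkn j)⟫ ^ 2
      ≤ (1 - ⟪u i, y⟫) ^ 2 := fun i =>
    (Real.sqrt_le_iff.mp (le_sub_iff_add_le'.mpr (htouch i))).2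
  have hlin : ∑ i, c i * ⟪u i, y⟫ = 0 := by
    have h : ⟪∑ i, c i • u i, y⟫ = 0 := by rw [ha, inner_zero_left]
    simpa only [sum_inner, real_inner_smul_left] using h
  calc ∑ j, (α j) ^ 2
      = ∑ j : Fin k, (α j) ^ 2 * ∑ i, c i * ⟪u i, v (Fin.castLE hkn j)⟫ ^ 2 := by
        refine Finset.sum_congr rfl fun j _ => ?_
        rw [john_sum_sq u c hb, v.norm_eq_one]
        ring
    _ = ∑ i, c i * ∑ j : Fin k, (α j) ^ 2 * ⟪u i, v (Fin.castLE hkn j)⟫ ^ 2 := by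
        simp_rw [Finset.mul_sum]
        rw [Finset.sum_comm]
        simp_rw [mul_left_comm]
    _ ≤ ∑ i, c i * (1 - ⟪u i, y⟫) ^ 2 :=
        Finset.sum_le_sum fun i _ => mul_le_mul_of_nonneg_left (hsq i) (hc i).le
    _ = ∑ i, c i - 2 * ∑ i, c i * ⟪u i, y⟫ + ∑ i, c i * ⟪u i, y⟫ ^ 2 := by
        rw [Finset.mul_sum, ← Finset.sum_sub_distrib, ← Finset.sum_add_distrib]
        exact Finset.sum_congr rfl fun i _ => by ring
    _ = n + ‖y‖ ^ 2 := by
        rw [john_sum_weights u c hu hb, hlin, john_sum_sq u c hb]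
        ring
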